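/- Let Γ be a distance-regular graph with classical parameters (D, b, α, β), D ≥ 4, and intersection numbers a₁ = 0 and a₂ ≠ 0. Fix vertices x, y with ∂(x,y) = 3, set C = {z ∈ Γ₃(x) : B(x,z) = B(x,y)} and Δ = [x,C] = {v ∈ X : ∃ z ∈ C with ∂(x,v)+∂(v,z)=∂(x,z)}. Then Δ is weak-geodetically closed with respect to x: for all z ∈ Δ and all vertices v with ∂(x,v)+∂(v,z) ≤ ∂(x,z)+1, one has v ∈ Δ. -/

import Mathlib

/-!
Common definitions: distance-regular graphs (via an intersection-number function `p`),
classical parameters, and the sets `B(x,y)`, `A(x,y)`, `C(x,y)`.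
The distance `∂` is `SimpleGraph.dist`.
-/

variable {V : Type*}

/-- `Γ` is distance-regular with intersection numbers `p h i j = p^h_{ij}`
(for indices up to the diameter `D`). -/
def SimpleGraph.IsDistRegularWith (G : SimpleGraph V) (D : ℕ) (p : ℕ → ℕ → ℕ → ℕ) : Prop :=
  ∀ h i j : ℕ, h ≤ D → i ≤ D → j ≤ D → ∀ x y : V, G.dist x y = h →
    {z : V | G.dist x z = i ∧ G.dist y z = j}.ncard = p h i j

/-- The Gaussian bracket `[i] = 1 + b + b² + ⋯ + b^{i-1}`. -/
def gaussBracket (b : ℝ) (i : ℕ) : ℝ := ∑ k ∈ Finset.range i, b ^ k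

/-- A distance-regular graph with intersection numbers `p` has classical parameters
`(D, b, α, β)`: `b ∉ {0, -1}`, `c_i = [i](1 + α[i-1])` and `b_i = ([D]-[i])(β - α[i])`
for `0 ≤ i ≤ D`, where `c_i = p^i_{1,i-1}` and `b_i = p^i_{1,i+1}`. -/
def HasClassicalParams (D : ℕ) (p : ℕ → ℕ → ℕ → ℕ) (b α β : ℝ) : Prop :=
  b ≠ 0 ∧ b ≠ -1 ∧
    (∀ i ≤ D, (p i 1 (i - 1) : ℝ) = gaussBracket b i * (1 + α * gaussBracket b (i - 1))) ∧
    (∀ i ≤ D, (p i 1 (i + 1) : ℝ) =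
      (gaussBracket b D - gaussBracket b i) * (β - α * gaussBracket b i))

/-- `B(x,y) = Γ₁(x) ∩ Γ_{∂(x,y)+1}(y)`. -/
def Bset (G : SimpleGraph V) (x y : V) : Set V :=
  {v | G.dist x v = 1 ∧ G.dist y v = G.dist x y + 1}

/-- `A(x,y) = Γ₁(x) ∩ Γ_{∂(x,y)}(y)`. -/
def Aset (G : SimpleGraph V) (x y : V) : Set V :=
  {v | G.dist x v = 1 ∧ G.dist y v = G.dist x y}

/-- `C(x,y) = Γ₁(x) ∩ Γ_{∂(x,y)-1}(y)`. -/
def Cset (G : SimpleGraph V) (x y : V) : Set V :=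
  {v | G.dist x v = 1 ∧ G.dist y v = G.dist x y - 1}

/-- `C = {z ∈ Γ₃(x) : B(x,z) = B(x,y)}`. -/
def Cclass (G : SimpleGraph V) (x y : V) : Set V :=
  {z | G.dist x z = 3 ∧ Bset G x z = Bset G x y}

/-- `Δ = [x, C] = {v : ∃ z ∈ C, ∂(x,v) + ∂(v,z) = ∂(x,z)}`. -/
def Delta (G : SimpleGraph V) (x y : V) : Set V :=
  {v | ∃ z ∈ Cclass G x y, G.dist x v + G.dist v z = G.dist x z}

/-!
Let `N` be the matrix with entries `b ^ (-∂(x, y))` and `N_x` the diagonal matrix of its row `x`.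
On the vectors depending only on the distance to `x`, the adjacency matrix `A` and `N_x` satisfy an
Askey–Wilson relation, so `P(N_x)` kills them, where `P` is the cubic map `tridiagonalMap`. As
`P` is self-adjoint for the trace form and `N²` is a combination of `N` and the all-ones matrix, a
trace computation upgrades this to `P(N_x) = 0`. Entrywise, this is Terwilliger's balanced set
condition: for `y, z` at distance `2` or `3`, the sums of `b ^ (-∂(x, v))` over `v ∈ A(y, z)` and
`v ∈ A(z, y)` differ by a multiple, independent of `x`, of `b ^ (-∂(x, y)) - b ^ (-∂(x, z))`.

With `a₁ = 0` the balanced set condition excludes parallelograms of length `3` and `4`. In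
particular `B(x, ·)` is constant along the edges inside `Γ₃(x)`. What remains is to move sideways
inside `Γ₂(x)`: if `z, w ∈ Γ₂(x)` are adjacent and `c ∈ Γ₃(x)` is a neighbour of `z`, then some
neighbour `s ∈ Γ₃(x)` of `w` has `B(x, s) = B(x, c)`. Usually `s` is found within two steps of `c`
along `Γ₃(x)`. In the exceptional case the balanced set condition at `x` forces `b = -2`, and then
at the vertices of `B(x, c)` it gives the equality directly.
-/

section Distance

variable {G : SimpleGraph V}

lemma exists_dist_eq_one_and_dist_eq (hG : G.Connected) {x y : V} {i : ℕ}
    (h : G.dist x y = i + 1) : ∃ v, G.dist x v = 1 ∧ G.dist v y = i := by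
  obtain ⟨q, hq⟩ := hG.exists_walk_length_eq_dist x y
  cases q with
  | nil => simp at h
  | @cons _ v _ hadj q =>
    have hxv : G.dist x v = 1 := SimpleGraph.dist_eq_one_iff_adj.2 hadj
    have hvy := SimpleGraph.dist_le q
    have htri := hG.dist_triangle (u := x) (v := v) (w := y)
    rw [SimpleGraph.Walk.length_cons] at hq
    exact ⟨v, hxv, by omega⟩

lemma exists_dist_eq_of_le (hG : G.Connected) {x y : V} {i : ℕ} (hi : i ≤ G.dist x y) :
    ∃ z, G.dist z y = i := by
  induction h : G.dist x y - i generalizing x with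
  | zero => exact ⟨x, by omega⟩
  | succ n ih =>
    obtain ⟨v, -, hv⟩ := exists_dist_eq_one_and_dist_eq hG (x := x) (y := y) (i := i + n) (by omega)
    exact ih (x := v) (by omega) (by omega)

variable [Fintype V]

open scoped Classical

lemma sum_neighborFinset_eq_sum_Cset_add_sum_Aset_add_sum_Bset (hG : G.Connected) (x y : V)
    (F : V → ℝ) :
    ∑ v ∈ G.neighborFinset x, F v = ∑ v ∈ (Cset G x y).toFinset, F v +
      ∑ v ∈ (Aset G x y).toFinset, F v + ∑ v ∈ (Bset G x y).toFinset, F v := by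
  have hdist : ∀ v, G.dist x v = 1 →
      G.dist x y ≤ 1 + G.dist y v ∧ G.dist y v ≤ G.dist x y + 1 := fun v hv => by
    have h₁ := hG.dist_triangle (u := x) (v := v) (w := y)
    have h₂ := hG.dist_triangle (u := y) (v := x) (w := v)
    grind [G.dist_comm]
  have hself : ∀ v, G.dist x v = 1 → G.dist x y = 0 → G.dist y v = 1 := fun v hv h => by
    rwa [← hG.dist_eq_zero_iff.1 h]
  rw [← Finset.sum_union, ← Finset.sum_union]
  · refine Finset.sum_congr ?_ fun _ _ => rfl
    ext v
    simp only [SimpleGraph.mem_neighborFinset, ← SimpleGraph.dist_eq_one_iff_adj, Cset, Aset, Bset,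
      Finset.mem_union]
    grind
  all_goals
    simp only [Finset.disjoint_left, Cset, Aset, Bset, Finset.mem_union]
    grind

lemma sum_toFinset_eq_ncard_mul {s : Set V} {f : V → ℝ} {c : ℝ} (hf : ∀ v ∈ s, f v = c) :
    ∑ v ∈ s.toFinset, f v = s.ncard * c := by
  rw [Finset.sum_congr rfl fun v hv => hf v (Set.mem_toFinset.1 hv), Finset.sum_const,
    nsmul_eq_mul, Set.ncard_eq_toFinset_card']

lemma sum_neighborFinset_dist (hG : G.Connected) (x y : V) (f : ℕ → ℝ) :
    ∑ v ∈ G.neighborFinset x, f (G.dist y v) = (Cset G x y).ncard * f (G.dist x y - 1) +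
      (Aset G x y).ncard * f (G.dist x y) + (Bset G x y).ncard * f (G.dist x y + 1) := by
  rw [sum_neighborFinset_eq_sum_Cset_add_sum_Aset_add_sum_Bset hG x y,
    sum_toFinset_eq_ncard_mul fun v hv => congrArg f hv.2,
    sum_toFinset_eq_ncard_mul fun v hv => congrArg f hv.2,
    sum_toFinset_eq_ncard_mul fun v hv => congrArg f hv.2]

lemma degree_eq_ncard_add_ncard_add_ncard (hG : G.Connected) (x y : V) :
    G.degree x = (Cset G x y).ncard + (Aset G x y).ncard + (Bset G x y).ncard := by
  have h := sum_neighborFinset_dist hG x y fun _ => 1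
  simp only [Finset.sum_const, SimpleGraph.card_neighborFinset_eq_degree, nsmul_eq_mul,
    mul_one] at h
  exact_mod_cast h

lemma radial_eq_zero_of_sum_neighborFinset_eq (hG : G.Connected) {w : V} {f : ℕ → ℝ} {θ c : ℝ}
    (h₀ : f 0 = 0) (h₁ : f 1 = 0)
    (hf : ∀ u, ∑ v ∈ G.neighborFinset u, f (G.dist w v) = θ * f (G.dist w u) + c) (u : V) :
    f (G.dist w u) = 0 := by
  simp only [sum_neighborFinset_dist hG] at hf
  have hc : c = 0 := by simpa [h₀, h₁, Cset, Aset] using (hf w).symm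
  suffices h : ∀ n u, G.dist u w = n → f n = 0 from h _ u (G.dist_comm)
  intro n
  induction n using Nat.strong_induction_on with
  | _ n ih =>
    intro u hu
    match n with
    | 0 => exact h₀
    | 1 => exact h₁
    | n + 2 =>
      obtain ⟨v, huv, hv⟩ := exists_dist_eq_one_and_dist_eq hG hu
      obtain ⟨v', -, hv'⟩ := exists_dist_eq_one_and_dist_eq hG hv
      have hB : (Bset G v w).ncard ≠ 0 :=
        Set.ncard_ne_zero_of_mem (a := u) ⟨G.dist_comm.trans huv, by rw [G.dist_comm, hu, hv]⟩
      have hv₀ := hf v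
      rw [G.dist_comm (u := w), hv, ih (n + 1) (by omega) v hv, hc, Nat.add_sub_cancel,
        ih n (by omega) v' hv'] at hv₀
      simpa [hB] using hv₀

end Distance

/-- `G` is a distance-regular graph of diameter `D` with intersection numbers `p h i j = p^h_{ij}`.
Attaining the distance `D` is part of the structure, since `IsDistRegularWith` says nothing about
`p h` when no pair of vertices is at distance `h`. -/
structure DistRegularGraph (G : SimpleGraph V) (D : ℕ) (p : ℕ → ℕ → ℕ → ℕ) : Prop where
  connected : G.Connected
  dist_le : ∀ x y, G.dist x y ≤ D
  exists_dist_eq_diam : ∃ x y, G.dist x y = D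
  regular : G.IsDistRegularWith D p

namespace DistRegularGraph

variable {G : SimpleGraph V} {D : ℕ} {p : ℕ → ℕ → ℕ → ℕ}

lemma exists_dist_eq (hG : DistRegularGraph G D p) {i : ℕ} (hi : i ≤ D) :
    ∃ x y, G.dist x y = i := by
  obtain ⟨x, y, hxy⟩ := hG.exists_dist_eq_diam
  obtain ⟨z, hz⟩ := exists_dist_eq_of_le hG.connected (hxy ▸ hi)
  exact ⟨z, y, hz⟩

lemma ncard_Cset (hG : DistRegularGraph G D p) (hD : 1 ≤ D) (x y : V) :
    (Cset G x y).ncard = p (G.dist x y) 1 (G.dist x y - 1) :=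
  hG.regular _ _ _ (hG.dist_le x y) hD ((Nat.sub_le _ _).trans (hG.dist_le x y)) x y rfl

lemma ncard_Aset (hG : DistRegularGraph G D p) (hD : 1 ≤ D) (x y : V) :
    (Aset G x y).ncard = p (G.dist x y) 1 (G.dist x y) :=
  hG.regular _ _ _ (hG.dist_le x y) hD (hG.dist_le x y) x y rfl

lemma ncard_Bset (hG : DistRegularGraph G D p) {x y : V} (h : G.dist x y < D) :
    (Bset G x y).ncard = p (G.dist x y) 1 (G.dist x y + 1) :=
  hG.regular _ _ _ h.le (by omega) h x y rfl

lemma Bset_eq_empty (hG : DistRegularGraph G D p) {x y : V} (h : G.dist x y = D) :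
    Bset G x y = ∅ :=
  Set.eq_empty_of_forall_notMem fun v hv => by
    have := hG.dist_le y v
    have := hv.2
    omega

lemma ncard_Bset_congr (hG : DistRegularGraph G D p) {x y x' y' : V}
    (h : G.dist x y = G.dist x' y') : (Bset G x y).ncard = (Bset G x' y').ncard := by
  rcases (hG.dist_le x y).lt_or_eq with hlt | heq
  · rw [hG.ncard_Bset hlt, hG.ncard_Bset (h ▸ hlt), h]
  · rw [hG.Bset_eq_empty heq, hG.Bset_eq_empty (h.symm.trans heq)]

lemma intersectionNumber_lower_ne_zero [Finite V] (hG : DistRegularGraph G D p) {i : ℕ}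
    (hi : i + 1 ≤ D) : p (i + 1) 1 i ≠ 0 := by
  obtain ⟨x, y, hxy⟩ := hG.exists_dist_eq hi
  obtain ⟨v, hxv, hvy⟩ := exists_dist_eq_one_and_dist_eq hG.connected hxy
  have hcard := hG.ncard_Cset (by omega) x y
  rw [hxy, Nat.add_sub_cancel] at hcard
  rw [← hcard]
  exact Set.ncard_ne_zero_of_mem (a := v) ⟨hxv, by rw [G.dist_comm, hvy, hxy, Nat.add_sub_cancel]⟩

lemma cliqueFree_three [Finite V] (hG : DistRegularGraph G D p) (hD : 1 ≤ D)
    (h : p 1 1 1 = 0) : G.CliqueFree 3 := by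
  classical
  intro s hs
  obtain ⟨x, y, z, hxy, hxz, hyz, -⟩ := SimpleGraph.is3Clique_iff.1 hs
  simp only [← SimpleGraph.dist_eq_one_iff_adj] at hxy hxz hyz
  have hcard := hG.ncard_Aset hD x y
  rw [hxy, h, Set.ncard_eq_zero] at hcard
  exact hcard.subset (show z ∈ Aset G x y from ⟨hxz, hyz.trans hxy.symm⟩)

lemma sum_dist_dist [Fintype V] (hG : DistRegularGraph G D p) (F : ℕ → ℕ → ℝ) (x y : V) :
    ∑ z, F (G.dist x z) (G.dist y z) =
      ∑ ij ∈ Finset.range (D + 1) ×ˢ Finset.range (D + 1),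
        p (G.dist x y) ij.1 ij.2 * F ij.1 ij.2 := by
  classical
  rw [← Finset.sum_fiberwise_of_maps_to (s := Finset.univ)
    (t := Finset.range (D + 1) ×ˢ Finset.range (D + 1)) (g := fun z => (G.dist x z, G.dist y z))
    fun z _ => by simp [hG.dist_le]]
  refine Finset.sum_congr rfl fun ij hij => ?_
  rw [Finset.mem_product, Finset.mem_range_succ_iff, Finset.mem_range_succ_iff] at hij
  rw [← hG.regular _ _ _ (hG.dist_le x y) hij.1 hij.2 x y rfl, Set.ncard_eq_toFinset_card',
    ← nsmul_eq_mul, ← Finset.sum_const]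
  refine Finset.sum_congr (by ext; simp [Prod.ext_iff]) fun z hz => ?_
  have hz : G.dist x z = ij.1 ∧ G.dist y z = ij.2 := by simpa using hz
  rw [hz.1, hz.2]

end DistRegularGraph

lemma dist_eq_two_of_cliqueFree_three {G : SimpleGraph V} (hG : G.Connected)
    (hfree : G.CliqueFree 3) {x y z : V} (hxy : G.dist x y = 1) (hxz : G.dist x z = 1)
    (hyz : y ≠ z) : G.dist y z = 2 := by
  classical
  have htri := hG.dist_triangle (u := y) (v := x) (w := z)
  have h₀ : G.dist y z ≠ 0 := fun h => hyz (hG.dist_eq_zero_iff.1 h)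
  have h₁ : G.dist y z ≠ 1 := fun h => hfree {x, y, z} <| SimpleGraph.is3Clique_triple_iff.2
    ⟨SimpleGraph.dist_eq_one_iff_adj.1 hxy, SimpleGraph.dist_eq_one_iff_adj.1 hxz,
      SimpleGraph.dist_eq_one_iff_adj.1 h⟩
  rw [G.dist_comm (u := y) (v := x)] at htri
  omega

section ClassicalParameters

variable {b α β : ℝ}

lemma pow_eq_one_iff_of_ne_neg_one (hb₁ : b ≠ 1) (hb : b ≠ -1) {n : ℕ} :
    b ^ n = 1 ↔ n = 0 := by
  simp [pow_eq_one_iff_cases, hb₁, hb]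

lemma add_inv_ne_zero (hb : b ≠ 0) : b + b⁻¹ ≠ 0 := fun h => by
  field_simp at h
  nlinarith [sq_nonneg b]

lemma add_inv_add_one_ne_zero (hb : b ≠ 0) : b + b⁻¹ + 1 ≠ 0 := fun h => by
  field_simp at h
  nlinarith [sq_nonneg (b + 1 / 2)]

/-- The Gaussian bracket `[i]`, as a function of `u = b ^ i`. -/
noncomputable def bracketOfPow (b u : ℝ) : ℝ := (u - 1) / (b - 1)

lemma gaussBracket_eq_bracketOfPow (hb : b ≠ 1) (i : ℕ) :
    gaussBracket b i = bracketOfPow b (b ^ i) :=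
  geom_sum_eq hb i

/-- The intersection number `c_i`, as a function of `u = b ^ i`. -/
noncomputable def lowerCoeff (b α u : ℝ) : ℝ :=
  bracketOfPow b u * (1 + α * bracketOfPow b (u / b))

/-- The intersection number `b_i`, as a function of `u = b ^ i`, where `d = [D]`. -/
noncomputable def upperCoeff (b α β d u : ℝ) : ℝ :=
  (d - bracketOfPow b u) * (β - α * bracketOfPow b u)

/-- The intersection number `a_i`, as a function of `u = b ^ i`, where `d = [D]`. -/
noncomputable def diagCoeff (b α β d u : ℝ) : ℝ :=
  bracketOfPow b u * (β - 1 + α * (d - bracketOfPow b u - bracketOfPow b (u / b)))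

/-- The action of the adjacency matrix on radial vectors `v ↦ g (b ^ ∂(w, v))`, as an operator on
the profile `g`. -/
noncomputable def radialAdj (b α β d : ℝ) (g : ℝ → ℝ) (u : ℝ) : ℝ :=
  lowerCoeff b α u * g (u / b) + diagCoeff b α β d u * g u + upperCoeff b α β d u * g (u * b)

lemma radialAdj_inv (d : ℝ) {u : ℝ} (hb₀ : b ≠ 0) (hb₁ : b ≠ 1) (hu : u ≠ 0) :
    radialAdj b α β d (·⁻¹) u =
      (d * β / b - (1 + (β + α * d - α) / b)) * u⁻¹ + (1 + (β + α * d - α) / b) := by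
  have : b - 1 ≠ 0 := sub_ne_zero.2 hb₁
  unfold radialAdj lowerCoeff diagCoeff upperCoeff bracketOfPow
  field_simp
  ring

lemma exists_askeyWilson_coeff (α β d : ℝ) (hb₀ : b ≠ 0) (hb₁ : b ≠ 1) :
    ∃ γ ρ ω η : ℝ, ∀ u, u ≠ 0 →
      let c := lowerCoeff b α
      let a := diagCoeff b α β d
      let f := upperCoeff b α β d
      (a u + a (u * b)) * (u⁻¹ + (u * b)⁻¹)
          - (b + b⁻¹) * (a u * u⁻¹ + a (u * b) * (u * b)⁻¹) - γ * (u⁻¹ + (u * b)⁻¹) = ω ∧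
      2 * (f u * c (u * b) + a u ^ 2 + c u * f (u / b)) * u⁻¹
          - (b + b⁻¹) *
            (f u * c (u * b) * (u * b)⁻¹ + a u ^ 2 * u⁻¹ + c u * f (u / b) * (u / b)⁻¹)
          - γ * (2 * a u * u⁻¹) - ρ * u⁻¹ = ω * a u + η := by
  have : b - 1 ≠ 0 := sub_ne_zero.2 hb₁
  let s := (β - 1 + α * d) * (b - 1) + 2 * α
  let ρ := ((b + 1) ^ 2 * (d * (b - 1) + 1) * (β * (b - 1) + α) * (b - 1 - α) + b * s ^ 2) /
    (b ^ 2 * (b - 1) ^ 2)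
  refine ⟨s / b, ρ, -(s + α * (b + 1) / b) / b, d * β * (1 - 1 / b ^ 2) - ρ, fun u hu => ⟨?_, ?_⟩⟩
  all_goals
    simp only [lowerCoeff, upperCoeff, diagCoeff, bracketOfPow, s, ρ]
    field_simp
    ring

/-- The Askey–Wilson relation between the adjacency operator `T` on profiles and the multiplication
`N` by `u⁻¹`. -/
lemma exists_askeyWilson_relation (α β d : ℝ) (hb₀ : b ≠ 0) (hb₁ : b ≠ 1) :
    ∃ γ ρ ω η : ℝ, ∀ (g : ℝ → ℝ) (u : ℝ), u ≠ 0 →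
      let T := radialAdj b α β d
      let N : (ℝ → ℝ) → ℝ → ℝ := fun g u => u⁻¹ * g u
      T (T (N g)) u - (b + b⁻¹) * T (N (T g)) u + N (T (T g)) u
          - γ * (T (N g) u + N (T g) u) - ρ * N g u = ω * T g u + η * g u := by
  obtain ⟨γ, ρ, ω, η, h⟩ := exists_askeyWilson_coeff α β d hb₀ hb₁
  refine ⟨γ, ρ, ω, η, fun g u hu => ?_⟩
  obtain ⟨hup, hdiag⟩ := h u hu
  obtain ⟨hdown, -⟩ := h (u / b) (div_ne_zero hu hb₀)
  rw [div_mul_cancel₀ _ hb₀] at hdown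
  -- `t = b + b⁻¹` is chosen so that the terms two steps away from `u` cancel.
  have hup₂ : (u * b * b)⁻¹ - (b + b⁻¹) * (u * b)⁻¹ + u⁻¹ = 0 := by
    field_simp
    ring
  have hdown₂ : (u / b / b)⁻¹ - (b + b⁻¹) * (u / b)⁻¹ + u⁻¹ = 0 := by
    field_simp
    ring
  simp only [radialAdj, div_mul_cancel₀ _ hb₀, mul_div_cancel_right₀ _ hb₀]
  set c := lowerCoeff b α
  set f := upperCoeff b α β d
  generalize (u * b * b)⁻¹ = u₂, (u * b)⁻¹ = u₁, (u / b / b)⁻¹ = v₂, (u / b)⁻¹ = v₁ at *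
  linear_combination g u * hdiag + f u * g (u * b) * hup + c u * g (u / b) * hdown
    + f u * f (u * b) * g (u * b * b) * hup₂ + c u * c (u / b) * g (u / b / b) * hdown₂

end ClassicalParameters

namespace DistRegularGraph

variable {G : SimpleGraph V} {D : ℕ} {p : ℕ → ℕ → ℕ → ℕ} {b α β : ℝ}

lemma natCast_ncard_Cset (hG : DistRegularGraph G D p) (hcp : HasClassicalParams D p b α β)
    (hD : 1 ≤ D) (x y : V) : ((Cset G x y).ncard : ℝ) =
      gaussBracket b (G.dist x y) * (1 + α * gaussBracket b (G.dist x y - 1)) := by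
  rw [hG.ncard_Cset hD, hcp.2.2.1 _ (hG.dist_le x y)]

lemma natCast_ncard_Bset (hG : DistRegularGraph G D p) (hcp : HasClassicalParams D p b α β)
    (x y : V) : ((Bset G x y).ncard : ℝ) =
      (gaussBracket b D - gaussBracket b (G.dist x y)) *
        (β - α * gaussBracket b (G.dist x y)) := by
  rcases (hG.dist_le x y).lt_or_eq with hlt | heq
  · rw [hG.ncard_Bset hlt, hcp.2.2.2 _ hlt.le]
  · simp [hG.Bset_eq_empty heq, heq]

open Classical in
lemma natCast_degree [Fintype V] (hG : DistRegularGraph G D p)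
    (hcp : HasClassicalParams D p b α β) (x : V) : (G.degree x : ℝ) = gaussBracket b D * β := by
  have hA : Aset G x x = ∅ := Set.eq_empty_of_forall_notMem fun v hv => by simpa [hv.1] using hv.2
  have hC : Cset G x x = ∅ := Set.eq_empty_of_forall_notMem fun v hv => by simpa [hv.1] using hv.2
  rw [degree_eq_ncard_add_ncard_add_ncard hG.connected x x, hA, hC]
  simpa [gaussBracket] using hG.natCast_ncard_Bset hcp x x

lemma natCast_ncard_Aset [Finite V] (hG : DistRegularGraph G D p)
    (hcp : HasClassicalParams D p b α β) (hD : 1 ≤ D) (x y : V) :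
    ((Aset G x y).ncard : ℝ) = gaussBracket b D * β -
      gaussBracket b (G.dist x y) * (1 + α * gaussBracket b (G.dist x y - 1)) -
      (gaussBracket b D - gaussBracket b (G.dist x y)) *
        (β - α * gaussBracket b (G.dist x y)) := by
  classical
  have := Fintype.ofFinite V
  rw [← hG.natCast_degree hcp x, ← hG.natCast_ncard_Cset hcp hD, ← hG.natCast_ncard_Bset hcp,
    degree_eq_ncard_add_ncard_add_ncard hG.connected x y]
  push_cast
  ring

lemma b_ne_one [Finite V] (hG : DistRegularGraph G D p) (hcp : HasClassicalParams D p b α β)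
    (hD : 3 ≤ D) (ha₁ : p 1 1 1 = 0) (ha₂ : p 2 1 2 ≠ 0) : b ≠ 1 := by
  rintro rfl
  obtain ⟨x₁, y₁, h₁⟩ := hG.exists_dist_eq (show 1 ≤ D by omega)
  obtain ⟨x₂, y₂, h₂⟩ := hG.exists_dist_eq (show 2 ≤ D by omega)
  have ha₁' := hG.natCast_ncard_Aset hcp (by omega) x₁ y₁
  have ha₂' := hG.natCast_ncard_Aset hcp (by omega) x₂ y₂
  have hc₂ := hcp.2.2.1 2 (by omega)
  have hc₃ := hcp.2.2.1 3 hD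
  rw [hG.ncard_Aset (by omega), h₁, ha₁] at ha₁'
  rw [hG.ncard_Aset (by omega), h₂] at ha₂'
  simp only [gaussBracket, one_pow, Finset.sum_const, Finset.card_range, nsmul_eq_mul,
    mul_one] at ha₁' ha₂' hc₂ hc₃
  norm_num at ha₁' ha₂' hc₂ hc₃
  have e₂ : (2 * p 2 1 1 + p 2 1 2 : ℝ) = 4 := by linarith
  have e₃ : (2 * p 3 1 2 + 3 * p 2 1 2 : ℝ) = 6 := by linarith
  norm_cast at e₂ e₃
  have : p 3 1 2 ≠ 0 := hG.intersectionNumber_lower_ne_zero hD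
  omega

variable [Fintype V]

open scoped Classical

lemma sum_neighborFinset_radial (hG : DistRegularGraph G D p)
    (hcp : HasClassicalParams D p b α β) (hD : 1 ≤ D) (hb : b ≠ 1) (g : ℝ → ℝ) (w u : V) :
    ∑ v ∈ G.neighborFinset u, g (b ^ G.dist w v) =
      radialAdj b α β (gaussBracket b D) g (b ^ G.dist w u) := by
  rw [sum_neighborFinset_dist hG.connected u w fun i => g (b ^ i), hG.natCast_ncard_Cset hcp hD,
    hG.natCast_ncard_Aset hcp hD, hG.natCast_ncard_Bset hcp, G.dist_comm (u := w)]
  have hb₀ := hcp.1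
  simp only [radialAdj, lowerCoeff, diagCoeff, upperCoeff, gaussBracket_eq_bracketOfPow hb]
  rcases G.dist u w with _ | i
  · simp [bracketOfPow]
  · simp only [Nat.add_sub_cancel, pow_succ, mul_div_cancel_right₀ _ hb₀]
    ring

lemma adjMatrix_mulVec_radial (hG : DistRegularGraph G D p)
    (hcp : HasClassicalParams D p b α β) (hD : 1 ≤ D) (hb : b ≠ 1) (g : ℝ → ℝ) (w : V) :
    Matrix.mulVec (G.adjMatrix ℝ) (fun v => g (b ^ G.dist w v)) =
      fun v => radialAdj b α β (gaussBracket b D) g (b ^ G.dist w v) := by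
  ext u
  rw [SimpleGraph.adjMatrix_mulVec_apply, hG.sum_neighborFinset_radial hcp hD hb]

end DistRegularGraph

section DistWeight

variable {G : SimpleGraph V} {b : ℝ}

/-- The matrix of weights `b ^ (-∂(x, y))`. For a graph with classical parameters it is a linear
combination of the all-ones matrix and a primitive idempotent with the `Q`-polynomial property. -/
noncomputable def distWeight (G : SimpleGraph V) (b : ℝ) : Matrix V V ℝ :=
  Matrix.of fun x y => (b ^ G.dist x y)⁻¹

lemma distWeight_apply (x y : V) : distWeight G b x y = (b ^ G.dist x y)⁻¹ := rfl

lemma distWeight_comm (x y : V) : distWeight G b x y = distWeight G b y x := by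
  rw [distWeight_apply, distWeight_apply, G.dist_comm]

end DistWeight

namespace DistRegularGraph

variable [Fintype V] {G : SimpleGraph V} {D : ℕ} {p : ℕ → ℕ → ℕ → ℕ} {b α β : ℝ}

open scoped Classical

lemma exists_distWeight_mul_adjMatrix_apply (hG : DistRegularGraph G D p)
    (hcp : HasClassicalParams D p b α β) (hD : 1 ≤ D) (hb : b ≠ 1) :
    ∃ θ τ : ℝ, ∀ w u,
      (distWeight G b * G.adjMatrix ℝ) w u = θ * distWeight G b w u + τ := by
  have hrad := fun w u => (hG.sum_neighborFinset_radial hcp hD hb (·⁻¹) w u).trans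
    (radialAdj_inv _ hcp.1 hb (pow_ne_zero _ hcp.1))
  exact ⟨_, _, fun w u => (G.mul_adjMatrix_apply ..).trans (hrad w u)⟩

lemma exists_distWeight_mul_self_apply_eq_radial (hG : DistRegularGraph G D p) (b : ℝ) :
    ∃ n : ℕ → ℝ, ∀ w u, (distWeight G b * distWeight G b) w u = n (G.dist w u) := by
  have hsum := hG.sum_dist_dist fun i j => (b ^ i)⁻¹ * (b ^ j)⁻¹
  have hN : ∀ w u, (distWeight G b * distWeight G b) w u =
      ∑ z, (b ^ G.dist w z)⁻¹ * (b ^ G.dist u z)⁻¹ := fun w u => by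
    simp only [Matrix.mul_apply, distWeight_apply, G.dist_comm (v := u)]
  exact ⟨fun h => ∑ ij ∈ Finset.range (D + 1) ×ˢ Finset.range (D + 1),
    p h ij.1 ij.2 * ((b ^ ij.1)⁻¹ * (b ^ ij.2)⁻¹), fun w u => (hN w u).trans (hsum w u)⟩

lemma exists_distWeight_mul_self_apply (hG : DistRegularGraph G D p)
    (hcp : HasClassicalParams D p b α β) (hD : 1 ≤ D) (hb : b ≠ 1) :
    ∃ κ ξ : ℝ, ∀ w u, (distWeight G b * distWeight G b) w u = κ * distWeight G b w u + ξ := by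
  obtain ⟨θ, τ, hNA⟩ := hG.exists_distWeight_mul_adjMatrix_apply hcp hD hb
  obtain ⟨n, hn⟩ := hG.exists_distWeight_mul_self_apply_eq_radial b
  have hb' : 1 - b⁻¹ ≠ 0 := sub_ne_zero.2 (by simpa [eq_comm] using hb)
  -- `κ` and `ξ` are forced by the values at distances `0` and `1`.
  obtain ⟨κ, hκ⟩ : ∃ κ, κ * (1 - b⁻¹) = n 0 - n 1 := ⟨_, div_mul_cancel₀ _ hb'⟩
  refine ⟨κ, n 0 - κ, fun w u => ?_⟩
  suffices h : n (G.dist w u) - (κ * (b ^ G.dist w u)⁻¹ + (n 0 - κ)) = 0 by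
    rw [hn, sub_eq_zero.1 h, distWeight_apply]
  refine radial_eq_zero_of_sum_neighborFinset_eq
    (f := fun i => n i - (κ * (b ^ i)⁻¹ + (n 0 - κ))) (θ := θ)
    (c := τ * ∑ x, distWeight G b w x - κ * τ + (θ - gaussBracket b D * β) * (n 0 - κ))
    hG.connected (by simp) (by linear_combination hκ) ?_ u
  intro u
  have hNA' : ∑ v ∈ G.neighborFinset u, (b ^ G.dist w v)⁻¹ = θ * (b ^ G.dist w u)⁻¹ + τ :=
    (G.mul_adjMatrix_apply (distWeight G b) w u).symm.trans (hNA w u)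
  have hNNA : ∑ v ∈ G.neighborFinset u, n (G.dist w v) =
      θ * n (G.dist w u) + τ * ∑ x, distWeight G b w x :=
    calc ∑ v ∈ G.neighborFinset u, n (G.dist w v)
        = (distWeight G b * (distWeight G b * G.adjMatrix ℝ)) w u := by
          rw [← Matrix.mul_assoc, SimpleGraph.mul_adjMatrix_apply]
          simp only [hn]
      _ = ∑ x, distWeight G b w x * (θ * distWeight G b x u + τ) := by
          rw [Matrix.mul_apply]
          simp only [hNA]
      _ = θ * n (G.dist w u) + τ * ∑ x, distWeight G b w x := by
          rw [← hn, Matrix.mul_apply, Finset.mul_sum, Finset.mul_sum, ← Finset.sum_add_distrib]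
          exact Finset.sum_congr rfl fun x _ => by ring
  rw [Finset.sum_sub_distrib, Finset.sum_add_distrib, ← Finset.mul_sum, hNNA, hNA',
    Finset.sum_const, SimpleGraph.card_neighborFinset_eq_degree, nsmul_eq_mul,
    hG.natCast_degree hcp]
  ring

end DistRegularGraph

section TridiagonalMap

open Matrix

variable [Fintype V]

/-- The Frobenius form `(X, Y) ↦ tr (Xᵀ Y)`. -/
noncomputable def frobeniusForm (V : Type*) [Fintype V] :
    LinearMap.BilinForm ℝ (Matrix V V ℝ) :=
  ((LinearMap.mul ℝ (Matrix V V ℝ)).compr₂ (traceLinearMap V ℝ ℝ)).comp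
    (transposeLinearEquiv V V ℝ ℝ).toLinearMap

lemma frobeniusForm_apply (X Y : Matrix V V ℝ) : frobeniusForm V X Y = (Xᵀ * Y).trace := rfl

lemma frobeniusForm_self_nonneg (X : Matrix V V ℝ) : 0 ≤ frobeniusForm V X X :=
  (posSemidef_conjTranspose_mul_self X).trace_nonneg

lemma frobeniusForm_self_eq_zero {X : Matrix V V ℝ} : frobeniusForm V X X = 0 ↔ X = 0 :=
  trace_conjTranspose_mul_self_eq_zero_iff

variable {A : Matrix V V ℝ} {t γ ρ : ℝ}

lemma mulLeft_mem_selfAdjointSubmodule (hA : Aᵀ = A) :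
    LinearMap.mulLeft ℝ A ∈ (frobeniusForm V).selfAdjointSubmodule := by
  rw [LinearMap.mem_selfAdjointSubmodule]
  intro X Y
  simp [frobeniusForm_apply, hA, Matrix.mul_assoc]

lemma mulRight_mem_selfAdjointSubmodule (hA : Aᵀ = A) :
    LinearMap.mulRight ℝ A ∈ (frobeniusForm V).selfAdjointSubmodule := by
  rw [LinearMap.mem_selfAdjointSubmodule]
  intro X Y
  simp [frobeniusForm_apply, hA, Matrix.mul_assoc, trace_mul_comm A]

lemma mul_mem_selfAdjointSubmodule {M : Type*} [AddCommGroup M] [Module ℝ M]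
    {B : LinearMap.BilinForm ℝ M} {f g : Module.End ℝ M} (hfg : Commute f g)
    (hf : f ∈ B.selfAdjointSubmodule) (hg : g ∈ B.selfAdjointSubmodule) :
    f * g ∈ B.selfAdjointSubmodule := by
  rw [LinearMap.mem_selfAdjointSubmodule] at *
  have := LinearMap.IsAdjointPair.mul hf hg
  rwa [← hfg.eq] at this

variable [DecidableEq V]

/-- The map `X ↦ [A, A²X - tAXA + XA² - γ(AX + XA) - ρX]`, whose vanishing at `X` is the
tridiagonal (Dolan–Grady type) relation for the pair `A, X`. -/
noncomputable def tridiagonalMap (A : Matrix V V ℝ) (t γ ρ : ℝ) :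
    Module.End ℝ (Matrix V V ℝ) :=
  let L := LinearMap.mulLeft ℝ A
  let R := LinearMap.mulRight ℝ A
  (L - R) * (L * L - t • (L * R) + R * R - γ • (L + R) - ρ • 1)

lemma tridiagonalMap_apply (X : Matrix V V ℝ) :
    tridiagonalMap A t γ ρ X =
      A * (A * (A * X) - t • (A * (X * A)) + X * A * A - γ • (A * X + X * A) - ρ • X) -
        (A * (A * X) - t • (A * (X * A)) + X * A * A - γ • (A * X + X * A) - ρ • X) * A := rfl

lemma tridiagonalMap_one : tridiagonalMap A t γ ρ 1 = 0 := by
  rw [tridiagonalMap_apply]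
  simp only [Matrix.mul_one, Matrix.one_mul]
  noncomm_ring

lemma tridiagonalMap_mem_selfAdjointSubmodule (hA : Aᵀ = A) :
    tridiagonalMap A t γ ρ ∈ (frobeniusForm V).selfAdjointSubmodule := by
  have hL := mulLeft_mem_selfAdjointSubmodule hA
  have hR := mulRight_mem_selfAdjointSubmodule hA
  have hLR := LinearMap.commute_mulLeft_right (R := ℝ) A A
  have hone : (1 : Module.End ℝ (Matrix V V ℝ)) ∈ (frobeniusForm V).selfAdjointSubmodule :=
    LinearMap.isAdjointPair_id
  refine mul_mem_selfAdjointSubmodule ?_ (sub_mem hL hR) <|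
    sub_mem (sub_mem (add_mem (sub_mem ?_ (Submodule.smul_mem _ _ ?_)) ?_)
      (Submodule.smul_mem _ _ (add_mem hL hR))) (Submodule.smul_mem _ _ hone)
  · have hL' := (Commute.refl (LinearMap.mulLeft ℝ A)).sub_left hLR.symm
    have hR' := hLR.sub_left (Commute.refl (LinearMap.mulRight ℝ A))
    exact ((((hL'.mul_right hL').sub_right ((hL'.mul_right hR').smul_right t)).add_right
      (hR'.mul_right hR')).sub_right ((hL'.add_right hR').smul_right γ)).sub_right
      ((Commute.one_right _).smul_right ρ)
  · exact mul_mem_selfAdjointSubmodule (Commute.refl _) hL hL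
  · exact mul_mem_selfAdjointSubmodule hLR hL hR
  · exact mul_mem_selfAdjointSubmodule (Commute.refl _) hR hR

end TridiagonalMap

section TraceArgument

open Matrix

variable [Fintype V] [DecidableEq V]

/-- The squared Frobenius norms of the matrices `P (diagonal (N x))` add up to zero, because
`∑ x, N x w * N x v` is an affine function of `N w v`. -/
lemma map_diagonal_eq_zero_of_isSelfAdjoint {P : Module.End ℝ (Matrix V V ℝ)}
    (hP : (frobeniusForm V).IsSelfAdjoint P) (hP₁ : P 1 = 0) {N : Matrix V V ℝ} {κ ξ : ℝ}
    (hN : ∀ w v, (Nᵀ * N) w v = κ * N w v + ξ)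
    (hPP : ∀ w, P (P (diagonal (N w))) w w = 0) (x : V) : P (diagonal (N x)) = 0 := by
  have hlin : ∀ f : V → ℝ, ∀ w, P (P (diagonal f)) w w = ∑ v, f v * P (P (single v v 1)) w w := by
    intro f w
    rw [← sum_single_eq_diagonal, map_sum, map_sum, Matrix.sum_apply]
    refine Finset.sum_congr rfl fun v _ => ?_
    rw [← mul_one (f v), ← smul_eq_mul, ← smul_single, map_smul, map_smul, Matrix.smul_apply,
      smul_eq_mul, smul_eq_mul, mul_one]
  have hone : ∀ w, ∑ v, P (P (single v v 1)) w w = 0 := fun w => by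
    have h := hlin (fun _ => 1) w
    rw [diagonal_one, hP₁, map_zero] at h
    simpa using h.symm
  have hsum : ∑ x, frobeniusForm V (P (diagonal (N x))) (P (diagonal (N x))) = 0 :=
    calc ∑ x, frobeniusForm V (P (diagonal (N x))) (P (diagonal (N x)))
        = ∑ x, ∑ w, N x w * P (P (diagonal (N x))) w w := by
          refine Finset.sum_congr rfl fun x _ => ?_
          rw [hP, frobeniusForm_apply, diagonal_transpose]
          simp only [trace, diag_apply, diagonal_mul]
      _ = ∑ w, ∑ v, (Nᵀ * N) w v * P (P (single v v 1)) w w := by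
          simp only [hlin, Finset.mul_sum, mul_apply, transpose_apply, Finset.sum_mul]
          rw [Finset.sum_comm]
          refine Finset.sum_congr rfl fun w _ => ?_
          rw [Finset.sum_comm]
          simp only [mul_assoc]
      _ = ∑ w, (κ * P (P (diagonal (N w))) w w + ξ * ∑ v, P (P (single v v 1)) w w) := by
          refine Finset.sum_congr rfl fun w _ => ?_
          simp only [hN, hlin, add_mul, Finset.sum_add_distrib, Finset.mul_sum, mul_assoc]
      _ = 0 := by simp [hPP, hone]
  have hx := (Finset.sum_eq_zero_iff_of_nonneg fun x _ => frobeniusForm_self_nonneg _).1 hsum x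
    (Finset.mem_univ x)
  exact frobeniusForm_self_eq_zero.1 hx

end TraceArgument

namespace DistRegularGraph

open Matrix

variable [Fintype V] {G : SimpleGraph V} {D : ℕ} {p : ℕ → ℕ → ℕ → ℕ} {b α β : ℝ}

open scoped Classical

lemma tridiagonalMap_mulVec_radial_eq_zero (hG : DistRegularGraph G D p)
    (hcp : HasClassicalParams D p b α β) (hD : 1 ≤ D) (hb : b ≠ 1) (t γ ρ : ℝ) (w : V)
    {X : Matrix V V ℝ} (hX : ∀ g : ℝ → ℝ, X *ᵥ (fun v => g (b ^ G.dist w v)) = 0) (g : ℝ → ℝ) :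
    tridiagonalMap (G.adjMatrix ℝ) t γ ρ X *ᵥ (fun v => g (b ^ G.dist w v)) = 0 := by
  simp only [tridiagonalMap_apply, sub_mulVec, add_mulVec, smul_mulVec, ← mulVec_mulVec,
    hG.adjMatrix_mulVec_radial hcp hD hb, hX, mulVec_zero, smul_zero, sub_zero, add_zero]

lemma tridiagonalMap_diagonal_mulVec_radial_eq_zero (hG : DistRegularGraph G D p)
    (hcp : HasClassicalParams D p b α β) (hD : 1 ≤ D) (hb : b ≠ 1) :
    ∃ γ ρ : ℝ, ∀ (w : V) (g : ℝ → ℝ),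
      tridiagonalMap (G.adjMatrix ℝ) (b + b⁻¹) γ ρ (diagonal (distWeight G b w)) *ᵥ
        (fun v => g (b ^ G.dist w v)) = 0 := by
  obtain ⟨γ, ρ, ω, η, hAW⟩ := exists_askeyWilson_relation α β (gaussBracket b D) hcp.1 hb
  refine ⟨γ, ρ, fun w g => ?_⟩
  set A := G.adjMatrix ℝ
  set N := diagonal (distWeight G b w)
  set T := radialAdj b α β (gaussBracket b D)
  let r : (ℝ → ℝ) → V → ℝ := fun g v => g (b ^ G.dist w v)
  let M : (ℝ → ℝ) → ℝ → ℝ := fun g u => u⁻¹ * g u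
  have hA : ∀ g, A *ᵥ r g = r (T g) := fun g => hG.adjMatrix_mulVec_radial hcp hD hb g w
  have hN : ∀ g, N *ᵥ r g = r (M g) := fun g => by
    ext v
    rw [mulVec_diagonal, distWeight_apply]
  set Φ := A * (A * N) - (b + b⁻¹) • (A * (N * A)) + N * A * A - γ • (A * N + N * A) - ρ • N
  have hΦ : ∀ g, Φ *ᵥ r g = r (ω • T g + η • g) := fun g => by
    simp only [Φ, sub_mulVec, add_mulVec, smul_mulVec, ← mulVec_mulVec, hA, hN]
    ext v
    exact hAW g _ (pow_ne_zero _ hcp.1)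
  have hT : T (ω • T g + η • g) = ω • T (T g) + η • T g := by
    ext u
    simp only [T, radialAdj, Pi.add_apply, Pi.smul_apply, smul_eq_mul]
    ring
  change (A * Φ - Φ * A) *ᵥ r g = 0
  rw [sub_mulVec, ← mulVec_mulVec, ← mulVec_mulVec, hA, hΦ, hA, hΦ, hT, sub_self]

lemma exists_tridiagonalMap_diagonal_distWeight_eq_zero (hG : DistRegularGraph G D p)
    (hcp : HasClassicalParams D p b α β) (hD : 1 ≤ D) (hb : b ≠ 1) :
    ∃ γ ρ : ℝ, ∀ x,
      tridiagonalMap (G.adjMatrix ℝ) (b + b⁻¹) γ ρ (diagonal (distWeight G b x)) = 0 := by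
  obtain ⟨γ, ρ, hker⟩ := hG.tridiagonalMap_diagonal_mulVec_radial_eq_zero hcp hD hb
  obtain ⟨κ, ξ, hN⟩ := hG.exists_distWeight_mul_self_apply hcp hD hb
  have hNT : (distWeight G b)ᵀ = distWeight G b := by
    ext
    exact distWeight_comm ..
  refine ⟨γ, ρ, fun x => map_diagonal_eq_zero_of_isSelfAdjoint (κ := κ) (ξ := ξ)
    ((LinearMap.mem_selfAdjointSubmodule _).1 (tridiagonalMap_mem_selfAdjointSubmodule
      G.transpose_adjMatrix)) tridiagonalMap_one (fun w v => by rw [hNT]; exact hN w v)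
    (fun w => ?_) x⟩
  have hindicator : (fun v => if b ^ G.dist w v = 1 then (1 : ℝ) else 0) = Pi.single w 1 := by
    ext v
    have hv : b ^ G.dist w v = 1 ↔ v = w := by
      rw [pow_eq_one_iff_of_ne_neg_one hb hcp.2.1, hG.connected.dist_eq_zero_iff, eq_comm]
    simp only [hv, Pi.single_apply]
  have hcol := hG.tridiagonalMap_mulVec_radial_eq_zero hcp hD hb (b + b⁻¹) γ ρ w (hker w)
    fun u => if u = 1 then 1 else 0
  rw [hindicator, mulVec_single_one] at hcol
  exact congrFun hcol w

end DistRegularGraph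

section TridiagonalConsequences

open Matrix

variable [Fintype V] [DecidableEq V] {A N : Matrix V V ℝ} {t γ ρ : ℝ}

lemma add_one_smul_sub_of_tridiagonalMap_eq_zero (h : tridiagonalMap A t γ ρ N = 0) :
    (t + 1) • (A * N * A ^ 2 - A ^ 2 * N * A) =
      N * (A ^ 3 - γ • A ^ 2 - ρ • A) - (A ^ 3 - γ • A ^ 2 - ρ • A) * N := by
  rw [← sub_eq_zero, ← h]
  simp only [tridiagonalMap_apply, pow_succ, pow_zero, Matrix.one_mul, mul_add, mul_sub, add_mul,
    sub_mul, Matrix.mul_smul, Matrix.smul_mul, Matrix.mul_assoc]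
  module

lemma smul_sub_of_tridiagonalMap_eq_zero (h : tridiagonalMap A t γ ρ N = 0) :
    t • (A * N * A ^ 3 - A ^ 3 * N * A) =
      N * (A ^ 4 - γ • A ^ 3 - ρ • A ^ 2) - (A ^ 4 - γ • A ^ 3 - ρ • A ^ 2) * N -
        γ • (A * N * A ^ 2 - A ^ 2 * N * A) := by
  have hsum : A * tridiagonalMap A t γ ρ N + tridiagonalMap A t γ ρ N * A = 0 := by
    rw [h, Matrix.mul_zero, Matrix.zero_mul, add_zero]
  rw [← sub_eq_zero, ← hsum]
  simp only [tridiagonalMap_apply, pow_succ, pow_zero, Matrix.one_mul, mul_add, mul_sub, add_mul,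
    sub_mul, Matrix.mul_smul, Matrix.smul_mul, Matrix.mul_assoc]
  module

lemma diagonal_mul_sub_mul_diagonal_apply (f : V → ℝ) (B : Matrix V V ℝ) (y z : V) :
    (diagonal f * B - B * diagonal f) y z = B y z * (f y - f z) := by
  rw [Matrix.sub_apply, diagonal_mul, mul_diagonal]
  ring

lemma exists_mul_diagonal_mul_sq_sub_apply (A : Matrix V V ℝ) (γ ρ : ℝ) (ht : t + 1 ≠ 0) :
    ∃ R : Matrix V V ℝ, ∀ f, tridiagonalMap A t γ ρ (diagonal f) = 0 → ∀ y z,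
      (A * diagonal f * A ^ 2 - A ^ 2 * diagonal f * A) y z = R y z * (f y - f z) := by
  refine ⟨(t + 1)⁻¹ • (A ^ 3 - γ • A ^ 2 - ρ • A), fun f hf y z => ?_⟩
  rw [← diagonal_mul_sub_mul_diagonal_apply, Matrix.mul_smul, Matrix.smul_mul, ← smul_sub,
    ← add_one_smul_sub_of_tridiagonalMap_eq_zero hf, inv_smul_smul₀ ht]

lemma exists_mul_diagonal_mul_cube_sub_apply (A : Matrix V V ℝ) (γ ρ : ℝ) (ht : t ≠ 0)
    (ht' : t + 1 ≠ 0) :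
    ∃ R : Matrix V V ℝ, ∀ f, tridiagonalMap A t γ ρ (diagonal f) = 0 → ∀ y z,
      (A * diagonal f * A ^ 3 - A ^ 3 * diagonal f * A) y z = R y z * (f y - f z) := by
  obtain ⟨R, hR⟩ := exists_mul_diagonal_mul_sq_sub_apply A γ ρ ht'
  refine ⟨t⁻¹ • (A ^ 4 - γ • A ^ 3 - ρ • A ^ 2 - γ • R), fun f hf y z => ?_⟩
  rw [← inv_smul_smul₀ ht (A * diagonal f * A ^ 3 - A ^ 3 * diagonal f * A),
    smul_sub_of_tridiagonalMap_eq_zero hf, Matrix.smul_apply, Matrix.sub_apply, Matrix.smul_apply,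
    hR f hf, diagonal_mul_sub_mul_diagonal_apply, Matrix.smul_apply, Matrix.sub_apply _ (γ • R),
    Matrix.smul_apply (A := R)]
  simp only [smul_eq_mul]
  ring

end TridiagonalConsequences

section Balanced

variable [Fintype V]

open scoped Classical in
/-- The balanced set condition at distance `n` for the representation `v ↦ distWeight G b v`: for
`y, z` at distance `n`, the difference of the sums over `A(y, z)` and `A(z, y)` is a multiple of the
difference of the images of `y` and `z`. -/
def BalancedAt (G : SimpleGraph V) (b : ℝ) (n : ℕ) : Prop :=
  ∀ y z, G.dist y z = n → ∃ r : ℝ, ∀ x,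
    ∑ v ∈ (Aset G y z).toFinset, distWeight G b x v -
      ∑ v ∈ (Aset G z y).toFinset, distWeight G b x v =
        r * (distWeight G b x y - distWeight G b x z)

end Balanced

section AdjMatrix

open Matrix

variable [Fintype V] {G : SimpleGraph V}

open scoped Classical

lemma ne_of_mem_neighborFinset {v y z : V} (hyz : G.dist y z ≠ 1) (hv : v ∈ G.neighborFinset y) :
    v ≠ z := by
  rintro rfl
  exact hyz (SimpleGraph.dist_eq_one_iff_adj.2 ((G.mem_neighborFinset ..).1 hv))

lemma adjMatrix_mul_diagonal_mul_apply (hG : G.Connected) (f : V → ℝ) {M : Matrix V V ℝ}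
    {m : ℕ → ℝ} {y z : V} (hM : ∀ v ∈ G.neighborFinset y, M v z = m (G.dist z v)) :
    (G.adjMatrix ℝ * diagonal f * M) y z =
      m (G.dist y z - 1) * ∑ v ∈ (Cset G y z).toFinset, f v +
        m (G.dist y z) * ∑ v ∈ (Aset G y z).toFinset, f v +
        m (G.dist y z + 1) * ∑ v ∈ (Bset G y z).toFinset, f v := by
  have hconst : ∀ (s : Set V) (i : ℕ), (∀ v ∈ s, G.dist z v = i) →
      ∑ v ∈ s.toFinset, m (G.dist z v) * f v = m i * ∑ v ∈ s.toFinset, f v := fun s i hs => by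
    rw [Finset.mul_sum]
    exact Finset.sum_congr rfl fun v hv => by rw [hs v (Set.mem_toFinset.1 hv)]
  calc (G.adjMatrix ℝ * diagonal f * M) y z
      = ∑ v ∈ G.neighborFinset y, m (G.dist z v) * f v := by
        rw [Matrix.mul_assoc, SimpleGraph.adjMatrix_mul_apply]
        exact Finset.sum_congr rfl fun v hv => by rw [diagonal_mul, hM v hv, mul_comm]
    _ = _ := by
        rw [sum_neighborFinset_eq_sum_Cset_add_sum_Aset_add_sum_Bset hG y z,
          hconst _ _ fun v hv => hv.2, hconst _ _ fun v hv => hv.2, hconst _ _ fun v hv => hv.2]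

lemma adjMatrix_pow_mul_diagonal_mul_apply (f : V → ℝ) (k : ℕ) (y z : V) :
    (G.adjMatrix ℝ ^ k * diagonal f * G.adjMatrix ℝ) y z =
      (G.adjMatrix ℝ * diagonal f * G.adjMatrix ℝ ^ k) z y := by
  rw [← transpose_apply (G.adjMatrix ℝ * diagonal f * G.adjMatrix ℝ ^ k), transpose_mul,
    transpose_mul, transpose_pow, diagonal_transpose, SimpleGraph.transpose_adjMatrix,
    Matrix.mul_assoc]

end AdjMatrix

namespace DistRegularGraph

open Matrix

variable [Fintype V] {G : SimpleGraph V} {D : ℕ} {p : ℕ → ℕ → ℕ → ℕ} {b α β : ℝ}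

open scoped Classical

lemma adjMatrix_sq_apply (hG : DistRegularGraph G D p) (hD : 1 ≤ D) (ha₁ : p 1 1 1 = 0) {y z : V}
    (hyz : y ≠ z) : (G.adjMatrix ℝ ^ 2) y z = if G.dist z y = 2 then (p 2 1 1 : ℝ) else 0 := by
  have hpos := hG.connected.pos_dist_of_ne hyz
  have hadj : ∀ v, G.adjMatrix ℝ v z = if G.dist z v = 1 then 1 else 0 := fun v => by
    rw [SimpleGraph.adjMatrix_apply, G.adj_comm,
      if_congr SimpleGraph.dist_eq_one_iff_adj.symm rfl rfl]
  rw [pow_two, SimpleGraph.adjMatrix_mul_apply, Finset.sum_congr rfl fun v _ => hadj v,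
    sum_neighborFinset_dist hG.connected y z fun i => if i = 1 then 1 else 0,
    hG.ncard_Cset hD, hG.ncard_Aset hD, G.dist_comm (u := z)]
  generalize G.dist y z = i at *
  match i with
  | 1 => simp [ha₁]
  | 2 => simp
  | i + 3 => simp

lemma adjMatrix_cube_apply (hG : DistRegularGraph G D p) (hD : 1 ≤ D) (ha₁ : p 1 1 1 = 0) {y z : V}
    (hyz : 2 ≤ G.dist y z) : (G.adjMatrix ℝ ^ 3) y z =
      if G.dist z y = 2 then (p 2 1 2 * p 2 1 1 : ℝ)
      else if G.dist z y = 3 then (p 3 1 2 * p 2 1 1 : ℝ) else 0 := by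
  rw [pow_succ', SimpleGraph.adjMatrix_mul_apply,
    Finset.sum_congr rfl fun v hv => hG.adjMatrix_sq_apply hD ha₁
      (ne_of_mem_neighborFinset (by omega) hv),
    sum_neighborFinset_dist hG.connected y z fun i => if i = 2 then (p 2 1 1 : ℝ) else 0,
    hG.ncard_Cset hD, hG.ncard_Aset hD, G.dist_comm (u := z)]
  generalize G.dist y z = i at *
  match i with
  | 2 => simp
  | 3 => simp
  | i + 4 => simp

lemma adjMatrix_mul_diagonal_mul_sq_apply (hG : DistRegularGraph G D p) (hD : 1 ≤ D)
    (ha₁ : p 1 1 1 = 0) (f : V → ℝ) {y z : V} (hyz : G.dist y z ≠ 1) :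
    (G.adjMatrix ℝ * diagonal f * G.adjMatrix ℝ ^ 2) y z =
      (if G.dist y z = 3 then (p 2 1 1 : ℝ) else 0) * ∑ v ∈ (Cset G y z).toFinset, f v +
      (if G.dist y z = 2 then (p 2 1 1 : ℝ) else 0) * ∑ v ∈ (Aset G y z).toFinset, f v := by
  rw [adjMatrix_mul_diagonal_mul_apply (m := fun i => if i = 2 then (p 2 1 1 : ℝ) else 0)
    hG.connected f fun v hv => hG.adjMatrix_sq_apply hD ha₁ (ne_of_mem_neighborFinset hyz hv)]
  simp [hyz]

lemma adjMatrix_mul_diagonal_mul_cube_apply (hG : DistRegularGraph G D p) (hD : 1 ≤ D)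
    (ha₁ : p 1 1 1 = 0) (f : V → ℝ) {y z : V} (hyz : G.dist y z = 3) :
    (G.adjMatrix ℝ * diagonal f * G.adjMatrix ℝ ^ 3) y z =
      p 2 1 2 * p 2 1 1 * ∑ v ∈ (Cset G y z).toFinset, f v +
      p 3 1 2 * p 2 1 1 * ∑ v ∈ (Aset G y z).toFinset, f v := by
  have hcube : ∀ v ∈ G.neighborFinset y, (G.adjMatrix ℝ ^ 3) v z =
      if G.dist z v = 2 then (p 2 1 2 * p 2 1 1 : ℝ)
      else if G.dist z v = 3 then (p 3 1 2 * p 2 1 1 : ℝ) else 0 := fun v hv => by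
    rw [SimpleGraph.mem_neighborFinset, ← SimpleGraph.dist_eq_one_iff_adj] at hv
    have := hG.connected.dist_triangle (u := y) (v := v) (w := z)
    exact hG.adjMatrix_cube_apply hD ha₁ (by omega)
  rw [adjMatrix_mul_diagonal_mul_apply (m := fun i => if i = 2 then (p 2 1 2 * p 2 1 1 : ℝ)
    else if i = 3 then (p 3 1 2 * p 2 1 1 : ℝ) else 0) hG.connected f hcube]
  simp [hyz]

lemma balancedAt_two (hG : DistRegularGraph G D p) (hcp : HasClassicalParams D p b α β)
    (hD : 2 ≤ D) (hb : b ≠ 1) (ha₁ : p 1 1 1 = 0) : BalancedAt G b 2 := by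
  intro y z hyz
  have hzy : G.dist z y = 2 := G.dist_comm.trans hyz
  have hc₂ : (p 2 1 1 : ℝ) ≠ 0 := Nat.cast_ne_zero.2 (hG.intersectionNumber_lower_ne_zero hD)
  obtain ⟨γ, ρ, htd⟩ := hG.exists_tridiagonalMap_diagonal_distWeight_eq_zero hcp (by omega) hb
  obtain ⟨R, hR⟩ := exists_mul_diagonal_mul_sq_sub_apply (G.adjMatrix ℝ) γ ρ
    (add_inv_add_one_ne_zero hcp.1)
  refine ⟨R y z / p 2 1 1, fun x => ?_⟩
  have h := hR _ (htd x) y z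
  rw [Matrix.sub_apply, adjMatrix_pow_mul_diagonal_mul_apply,
    hG.adjMatrix_mul_diagonal_mul_sq_apply (by omega) ha₁ _ (by omega),
    hG.adjMatrix_mul_diagonal_mul_sq_apply (by omega) ha₁ _ (by omega), hyz, hzy] at h
  norm_num at h
  field_simp
  linear_combination h

lemma balancedAt_three (hG : DistRegularGraph G D p) (hcp : HasClassicalParams D p b α β)
    (hD : 3 ≤ D) (hb : b ≠ 1) (ha₁ : p 1 1 1 = 0) : BalancedAt G b 3 := by
  intro y z hyz
  have hzy : G.dist z y = 3 := G.dist_comm.trans hyz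
  have hc₂ : (p 2 1 1 : ℝ) ≠ 0 :=
    Nat.cast_ne_zero.2 (hG.intersectionNumber_lower_ne_zero (by omega))
  have hc₃ : (p 3 1 2 : ℝ) ≠ 0 := Nat.cast_ne_zero.2 (hG.intersectionNumber_lower_ne_zero hD)
  obtain ⟨γ, ρ, htd⟩ := hG.exists_tridiagonalMap_diagonal_distWeight_eq_zero hcp (by omega) hb
  obtain ⟨R, hR⟩ := exists_mul_diagonal_mul_sq_sub_apply (G.adjMatrix ℝ) γ ρ
    (add_inv_add_one_ne_zero hcp.1)
  obtain ⟨S, hS⟩ := exists_mul_diagonal_mul_cube_sub_apply (G.adjMatrix ℝ) γ ρ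
    (add_inv_ne_zero hcp.1) (add_inv_add_one_ne_zero hcp.1)
  refine ⟨(S y z - p 2 1 2 * R y z) / (p 2 1 1 * p 3 1 2), fun x => ?_⟩
  have hsq := hR _ (htd x) y z
  have hcube := hS _ (htd x) y z
  rw [Matrix.sub_apply, adjMatrix_pow_mul_diagonal_mul_apply] at hsq hcube
  rw [hG.adjMatrix_mul_diagonal_mul_sq_apply (by omega) ha₁ _ (by omega),
    hG.adjMatrix_mul_diagonal_mul_sq_apply (by omega) ha₁ _ (by omega), hyz, hzy] at hsq
  rw [hG.adjMatrix_mul_diagonal_mul_cube_apply (by omega) ha₁ _ hyz,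
    hG.adjMatrix_mul_diagonal_mul_cube_apply (by omega) ha₁ _ hzy] at hcube
  norm_num at hsq
  field_simp
  linear_combination hcube - p 2 1 2 * hsq

end DistRegularGraph

section Parallelogram

variable {G : SimpleGraph V} {b : ℝ}

/-- A parallelogram of length `n` (Terwilliger), given by its vertices in cyclic order. -/
structure IsParallelogram (G : SimpleGraph V) (n : ℕ) (x y z w : V) : Prop where
  dist₁₂ : G.dist x y = 1
  dist₃₄ : G.dist z w = 1
  dist₁₃ : G.dist x z = n
  dist₁₄ : G.dist x w + 1 = n
  dist₂₄ : G.dist y w + 1 = n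
  dist₂₃ : G.dist y z + 1 = n

variable [Fintype V]

open scoped Classical

lemma sum_distWeight_Aset_left (y z : V) :
    ∑ v ∈ (Aset G y z).toFinset, distWeight G b y v = (Aset G y z).ncard * b⁻¹ :=
  sum_toFinset_eq_ncard_mul fun v hv => by rw [distWeight_apply, hv.1, pow_one]

lemma sum_distWeight_Aset_right (y z : V) :
    ∑ v ∈ (Aset G y z).toFinset, distWeight G b z v =
      (Aset G y z).ncard * (b ^ G.dist y z)⁻¹ :=
  sum_toFinset_eq_ncard_mul fun v hv => by rw [distWeight_apply, hv.2]

lemma dist_eq_of_sum_distWeight_eq {s : Set V} {u : V} {i j : ℕ} (hij : b ^ i ≠ b ^ j)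
    (hs : ∀ v ∈ s, G.dist u v = i ∨ G.dist u v = j)
    (hsum : ∑ v ∈ s.toFinset, distWeight G b u v = s.ncard * (b ^ i)⁻¹) :
    ∀ v ∈ s, G.dist u v = i := by
  set δ := (b ^ j)⁻¹ - (b ^ i)⁻¹
  have hδ : δ ≠ 0 := sub_ne_zero.2 (inv_injective.ne hij.symm)
  have hterm : ∀ v ∈ s.toFinset, 0 ≤ δ * (distWeight G b u v - (b ^ i)⁻¹) := fun v hv => by
    rw [distWeight_apply]
    rcases hs v (Set.mem_toFinset.1 hv) with h | h
    · simp [h]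
    · rw [h]
      exact mul_self_nonneg δ
  have hzero : ∑ v ∈ s.toFinset, δ * (distWeight G b u v - (b ^ i)⁻¹) = 0 := by
    rw [← Finset.mul_sum, Finset.sum_sub_distrib, hsum, sum_toFinset_eq_ncard_mul fun _ _ => rfl,
      sub_self, mul_zero]
  intro v hv
  refine (hs v hv).resolve_right fun h => hδ ?_
  have hv₀ := (Finset.sum_eq_zero_iff_of_nonneg hterm).1 hzero v (Set.mem_toFinset.2 hv)
  rw [distWeight_apply, h] at hv₀
  exact mul_self_eq_zero.1 hv₀

lemma BalancedAt.sub_eq {n : ℕ} (hbal : BalancedAt G b n) (hb : b ≠ 0) {y z : V}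
    (hyz : G.dist y z = n) (hcard : (Aset G z y).ncard = (Aset G y z).ncard) (x : V) :
    (b ^ n - 1) * (∑ v ∈ (Aset G y z).toFinset, distWeight G b x v -
      ∑ v ∈ (Aset G z y).toFinset, distWeight G b x v) =
        (Aset G y z).ncard * (b ^ n * b⁻¹ - 1) * (distWeight G b x y - distWeight G b x z) := by
  obtain ⟨r, hr⟩ := hbal y z hyz
  -- The multiplier is found by taking `x = y`.
  have hry := hr y
  rw [sum_distWeight_Aset_left, sum_distWeight_Aset_right, hcard, distWeight_apply,
    distWeight_apply, G.dist_comm (u := z), hyz, SimpleGraph.dist_self, pow_zero, inv_one] at hry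
  have hbn : b ^ n * (b ^ n)⁻¹ = 1 := mul_inv_cancel₀ (pow_ne_zero n hb)
  rw [hr x]
  linear_combination (distWeight G b x z - distWeight G b x y) *
    (b ^ n * hry + ((Aset G y z).ncard - r) * hbn)

/-- Balance of the pair `y, z` of a parallelogram `x y z w`, tested at `x`, forces all of `A(z, y)`,
and hence `w`, to lie at distance `n + 1` from `x`. -/
lemma BalancedAt.not_isParallelogram {n : ℕ} (hbal : BalancedAt G b n) (hG : G.Connected)
    (hfree : G.CliqueFree 3) (hb₀ : b ≠ 0) (hb₁ : b ≠ 1) (hbn : b ^ n ≠ 1) {x y z w : V}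
    (hcard : (Aset G z y).ncard = (Aset G y z).ncard) :
    ¬ IsParallelogram G (n + 1) x y z w := by
  rintro ⟨hxy, hzw, hxz, hxw, hyw, hyz⟩
  rw [Nat.add_right_cancel_iff] at hxw hyw hyz
  have hleft : ∑ v ∈ (Aset G y z).toFinset, distWeight G b x v =
      (Aset G y z).ncard * (b ^ 2)⁻¹ := by
    refine sum_toFinset_eq_ncard_mul fun v hv => ?_
    have hxv : x ≠ v := by
      rintro rfl
      have : G.dist x z = G.dist y z := G.dist_comm.trans hv.2
      omega
    rw [distWeight_apply,
      dist_eq_two_of_cliqueFree_three hG hfree (G.dist_comm.trans hxy) hv.1 hxv]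
  have hright : ∑ v ∈ (Aset G z y).toFinset, distWeight G b x v =
      (Aset G z y).ncard * (b ^ (n + 1))⁻¹ := by
    have h := hbal.sub_eq hb₀ hyz hcard x
    rw [hleft, distWeight_apply, distWeight_apply, hxy, hxz] at h
    refine mul_left_cancel₀ (sub_ne_zero.2 hbn) ?_
    rw [pow_one, pow_succ, mul_inv, ← inv_pow] at h
    rw [hcard, pow_succ, mul_inv]
    linear_combination -h + (Aset G y z).ncard * b⁻¹ * (b⁻¹ - 1) *
      mul_inv_cancel₀ (pow_ne_zero n hb₀)
  have hdist : ∀ v ∈ Aset G z y, G.dist x v = n + 1 ∨ G.dist x v = n := fun v hv => by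
    have h₁ := hG.dist_triangle (u := x) (v := y) (w := v)
    have h₂ := hG.dist_triangle (u := x) (v := v) (w := z)
    have := hv.1
    have := hv.2
    grind [G.dist_comm]
  have hpow : b ^ (n + 1) ≠ b ^ n := by
    rw [pow_succ]
    exact fun h => hb₁ (mul_eq_left₀ (pow_ne_zero n hb₀) |>.1 h)
  have hw : w ∈ Aset G z y := ⟨hzw, by rw [hyw, G.dist_comm, hyz]⟩
  have := dist_eq_of_sum_distWeight_eq hpow hdist hright w hw
  omega

end Parallelogram

section ParallelogramFree

/-- `G` contains no parallelogram of length `n`. -/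
def ParallelogramFree (G : SimpleGraph V) (n : ℕ) : Prop :=
  ∀ x y z w, ¬ IsParallelogram G n x y z w

/-- Vertices `c` and `w` hanging off a common neighbour `z` at distance `2` from the base vertex
`x`, the one at distance `3` and the other at distance `2` from `x`. -/
structure IsFork (G : SimpleGraph V) (x z c w : V) : Prop where
  dist_xz : G.dist x z = 2
  dist_xc : G.dist x c = 3
  dist_zc : G.dist z c = 1
  dist_zw : G.dist z w = 1
  dist_xw : G.dist x w = 2

variable {G : SimpleGraph V} {x z c w : V}

lemma Bset_subset_of_dist_eq_one (hG : G.Connected) {n : ℕ} (hpar : ParallelogramFree G (n + 1))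
    {c' : V} (hcc' : G.dist c c' = 1) (hxc : G.dist x c = n) (hxc' : G.dist x c' = n) :
    Bset G x c ⊆ Bset G x c' := by
  rintro u ⟨hxu, hcu⟩
  have h₁ := hG.dist_triangle (u := c) (v := c') (w := u)
  have h₂ := hG.dist_triangle (u := c') (v := x) (w := u)
  refine ⟨hxu, by_contra fun hne => hpar u x c c' ⟨?_, ?_, ?_, ?_, ?_, ?_⟩⟩
  all_goals grind [G.dist_comm]

lemma Bset_eq_of_dist_eq_one (hG : G.Connected) {n : ℕ} (hpar : ParallelogramFree G (n + 1))
    {c' : V} (hcc' : G.dist c c' = 1) (hxc : G.dist x c = n) (hxc' : G.dist x c' = n) :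
    Bset G x c = Bset G x c' :=
  (Bset_subset_of_dist_eq_one hG hpar hcc' hxc hxc').antisymm
    (Bset_subset_of_dist_eq_one hG hpar (G.dist_comm.trans hcc') hxc' hxc)

lemma IsFork.dist_eq_two (h : IsFork G x z c w) (hG : G.Connected) (hfree : G.CliqueFree 3) :
    G.dist c w = 2 :=
  dist_eq_two_of_cliqueFree_three hG hfree h.dist_zc h.dist_zw <| by
    rintro rfl
    simpa [h.dist_xw] using h.dist_xc

lemma IsFork.Cset_subset (h : IsFork G x z c w) (hG : G.Connected) (hfree : G.CliqueFree 3)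
    (hpar : ParallelogramFree G 3) {e : V} (hce : G.dist c e = 1) (hwe : G.dist w e = 1)
    (hxe : G.dist x e = 2) (hez : G.dist e z = 2) : Cset G e x ⊆ Cset G e z := by
  obtain ⟨hxz, hxc, hzc, hzw, hxw⟩ := h
  rintro u ⟨heu, hxu⟩
  have := hG.dist_triangle (u := x) (v := u) (w := c)
  have := hG.dist_triangle (u := u) (v := e) (w := c)
  have := hG.dist_triangle (u := u) (v := x) (w := z)
  have := hG.dist_triangle (u := x) (v := u) (w := z)
  have huw : G.dist u w = 2 :=
    dist_eq_two_of_cliqueFree_three hG hfree heu (G.dist_comm.trans hwe)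
      (by rintro rfl; grind [G.dist_comm])
  have h₂ : G.dist u z ≠ 2 := fun huz => hpar x u c z (by constructor <;> grind [G.dist_comm])
  have h₃ : G.dist u z ≠ 3 := fun huz => hpar u x z w (by constructor <;> grind [G.dist_comm])
  exact ⟨heu, by grind [G.dist_comm]⟩

/-- A second common neighbour `e` of `c` and `w` at distance `2` from `x` would make `C(e, z)`
larger than `C(e, x)`, since it contains `c`. -/
lemma IsFork.dist_eq_three_of_common_neighbor (h : IsFork G x z c w) (hG : G.Connected)
    (hfree : G.CliqueFree 3) (hpar : ParallelogramFree G 3) [Finite V] {e : V}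
    (hcard : ∀ y y', G.dist e y = 2 → G.dist e y' = 2 → (Cset G e y).ncard = (Cset G e y').ncard)
    (hce : G.dist c e = 1) (hwe : G.dist w e = 1) (hez : e ≠ z) : G.dist x e = 3 := by
  have hxe_le := hG.dist_triangle (u := x) (v := w) (w := e)
  have hxe_ge := hG.dist_triangle (u := x) (v := e) (w := c)
  rw [h.dist_xw, hwe] at hxe_le
  rw [h.dist_xc, G.dist_comm (u := e), hce] at hxe_ge
  by_contra hne
  have hxe : G.dist x e = 2 := by omega
  have hez : G.dist e z = 2 := dist_eq_two_of_cliqueFree_three hG hfree hce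
    (G.dist_comm.trans h.dist_zc) hez
  have hC := Set.eq_of_subset_of_ncard_le (h.Cset_subset hG hfree hpar hce hwe hxe hez)
    (hcard z x hez (G.dist_comm.trans hxe)).le
  have hc : c ∈ Cset G e x := hC ▸ ⟨G.dist_comm.trans hce, by rw [h.dist_zc, hez]⟩
  have := hc.2
  rw [h.dist_xc, G.dist_comm, hxe] at this
  omega

lemma IsFork.dist_eq_three_of_dist_eq_two (h : IsFork G x z c w) (hG : G.Connected)
    (hfree : G.CliqueFree 3) (hpar : ParallelogramFree G 3) {s : V}
    (huniq : (Cset G s z).Subsingleton)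
    (hws : G.dist w s = 1) (hcs : G.dist c s = 2) : G.dist x s = 3 := by
  obtain ⟨hxz, hxc, hzc, hzw, hxw⟩ := h
  have hsz : G.dist s z = 2 := dist_eq_two_of_cliqueFree_three hG hfree hws
    (G.dist_comm.trans hzw) (by rintro rfl; grind [G.dist_comm])
  have hxs_le := hG.dist_triangle (u := x) (v := w) (w := s)
  have hxs_ge := hG.dist_triangle (u := x) (v := s) (w := c)
  have h₁ : G.dist x s ≠ 1 := fun hxs => hpar x s c z (by constructor <;> grind [G.dist_comm])
  have h₂ : G.dist x s ≠ 2 := by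
    intro hxs
    obtain ⟨u, hxu, hus⟩ := exists_dist_eq_one_and_dist_eq hG hxs
    have huw : G.dist u w = 2 := dist_eq_two_of_cliqueFree_three hG hfree
      (G.dist_comm.trans hus) (G.dist_comm.trans hws) (by rintro rfl; omega)
    have := hG.dist_triangle (u := u) (v := x) (w := z)
    have := hG.dist_triangle (u := x) (v := u) (w := z)
    have := hG.dist_triangle (u := x) (v := u) (w := c)
    have := hG.dist_triangle (u := u) (v := z) (w := c)
    have huz₁ : G.dist u z ≠ 1 := fun huz => by
      have : u = w := huniq ⟨G.dist_comm.trans hus, by grind [G.dist_comm]⟩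
        ⟨G.dist_comm.trans hws, by grind [G.dist_comm]⟩
      grind [G.dist_self]
    have huz₃ : G.dist u z ≠ 3 := fun huz =>
      hpar u x z w (by constructor <;> grind [G.dist_comm])
    have huc₂ : G.dist u c ≠ 2 := fun huc =>
      hpar x u c z (by constructor <;> grind [G.dist_comm])
    have huc₃ : G.dist u c ≠ 3 := fun huc =>
      hpar u s c z (by constructor <;> grind [G.dist_comm])
    grind [G.dist_comm]
  grind [G.dist_comm]

lemma IsFork.dist_ne_four (h : IsFork G x z c w) (hG : G.Connected) (hfree : G.CliqueFree 3)
    (hpar₃ : ParallelogramFree G 3) (hpar₄ : ParallelogramFree G 4) {s t : V}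
    (hws : G.dist w s = 1) (hst : G.dist s t = 1) (hct : G.dist c t = 1) (hxs : G.dist x s = 3) :
    G.dist x t ≠ 4 := by
  intro hxt
  obtain ⟨hxz, hxc, hzc, hzw, hxw⟩ := h
  obtain ⟨u, hxu, huz⟩ := exists_dist_eq_one_and_dist_eq hG hxz
  have huw : G.dist u w = 2 := dist_eq_two_of_cliqueFree_three hG hfree
    (G.dist_comm.trans huz) hzw (by rintro rfl; omega)
  have := hG.dist_triangle (u := x) (v := u) (w := c)
  have := hG.dist_triangle (u := u) (v := z) (w := c)
  have := hG.dist_triangle (u := x) (v := u) (w := s)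
  have := hG.dist_triangle (u := u) (v := w) (w := s)
  have := hG.dist_triangle (u := x) (v := u) (w := t)
  have := hG.dist_triangle (u := u) (v := c) (w := t)
  have hus₂ : G.dist u s ≠ 2 := fun hus =>
    hpar₃ x u s w (by constructor <;> grind [G.dist_comm])
  have hus₃ : G.dist u s ≠ 3 := fun hus =>
    hpar₄ x u t s (by constructor <;> grind [G.dist_comm])
  omega

lemma IsFork.dist_eq_three_of_mem_Bset (h : IsFork G x z c w) (hG : G.Connected)
    (hpar : ParallelogramFree G 3) {u : V} (hu : u ∈ Bset G x c) :
    G.dist u z = 3 ∧ G.dist u w = 3 := by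
  obtain ⟨hxz, hxc, hzc, hzw, hxw⟩ := h
  obtain ⟨hxu, hcu⟩ := hu
  have := hG.dist_triangle (u := u) (v := x) (w := z)
  have := hG.dist_triangle (u := u) (v := z) (w := c)
  have := hG.dist_triangle (u := u) (v := x) (w := w)
  have := hG.dist_triangle (u := u) (v := w) (w := z)
  have huz : G.dist u z = 3 := by grind [G.dist_comm]
  have huw : G.dist u w ≠ 2 := fun huw => hpar u x z w (by constructor <;> grind [G.dist_comm])
  exact ⟨huz, by grind [G.dist_comm]⟩

lemma IsFork.dist_eq_three_or_four (h : IsFork G x z c w) (hG : G.Connected)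
    (hfree : G.CliqueFree 3) (hpar₃ : ParallelogramFree G 3) (hpar₄ : ParallelogramFree G 4)
    {u s : V} (hu : u ∈ Bset G x c) (hws : G.dist w s = 1) (hcs : G.dist c s = 2)
    (hxs : G.dist x s = 3) : G.dist u s = 3 ∨ G.dist u s = 4 := by
  obtain ⟨huz, -⟩ := h.dist_eq_three_of_mem_Bset hG hpar₃ hu
  obtain ⟨hxz, hxc, hzc, hzw, -⟩ := h
  obtain ⟨hxu, hcu⟩ := hu
  have := hG.dist_triangle (u := u) (v := x) (w := s)
  have := hG.dist_triangle (u := u) (v := s) (w := c)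
  have hus : G.dist u s ≠ 2 := by
    intro hus
    obtain ⟨v, huv, hvs⟩ := exists_dist_eq_one_and_dist_eq hG hus
    have hsz : G.dist s z = 2 := dist_eq_two_of_cliqueFree_three hG hfree hws
      (G.dist_comm.trans hzw) (by rintro rfl; grind [G.dist_comm])
    have := hG.dist_triangle (u := v) (v := s) (w := c)
    have := hG.dist_triangle (u := u) (v := v) (w := c)
    have := hG.dist_triangle (u := u) (v := v) (w := z)
    have := hG.dist_triangle (u := v) (v := s) (w := z)
    have hvz₂ : G.dist v z ≠ 2 := fun hvz =>
      hpar₃ v s c z (by constructor <;> grind [G.dist_comm])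
    have hvz₃ : G.dist v z ≠ 3 := fun hvz =>
      hpar₄ u v c z (by constructor <;> grind [G.dist_comm])
    omega
  grind [G.dist_comm]

end ParallelogramFree

section Exceptional

variable [Fintype V] {G : SimpleGraph V} {b : ℝ} {x y z : V}

lemma BalancedAt.eq_neg_two (hbal : BalancedAt G b 2) (hb₀ : b ≠ 0) (hb₁ : b ≠ 1)
    (hyz : G.dist y z = 2) (hcard : (Aset G z y).ncard = (Aset G y z).ncard)
    (hne : (Aset G y z).ncard ≠ 0) (hxy : G.dist x y = 3) (hxz : G.dist x z = 2)
    (hAyz : ∀ t ∈ Aset G y z, G.dist x t = 2) (hAzy : ∀ s ∈ Aset G z y, G.dist x s = 3) :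
    b = -2 := by
  classical
  have h := hbal.sub_eq hb₀ hyz hcard x
  rw [sum_toFinset_eq_ncard_mul (c := (b ^ 2)⁻¹) fun t ht => by rw [distWeight_apply, hAyz t ht],
    sum_toFinset_eq_ncard_mul (c := (b ^ 3)⁻¹) fun s hs => by rw [distWeight_apply, hAzy s hs],
    hcard, distWeight_apply, distWeight_apply, hxy, hxz] at h
  have hprod : ((Aset G y z).ncard : ℝ) * ((b - 1) ^ 2 * (b + 2)) = 0 := by
    field_simp at h
    linear_combination ((Aset G y z).ncard : ℝ) * (b - 1) * h
  have := (mul_eq_zero.1 hprod).resolve_left (Nat.cast_ne_zero.2 hne)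
  exact eq_neg_of_add_eq_zero_left
    ((mul_eq_zero.1 this).resolve_left (pow_ne_zero 2 (sub_ne_zero.2 hb₁)))

lemma BalancedAt.dist_eq_four (hbal : BalancedAt G (-2) 2) (hyz : G.dist y z = 2)
    (hcard : (Aset G z y).ncard = (Aset G y z).ncard) (hxy : G.dist x y = 4)
    (hxz : G.dist x z = 3) (hAyz : ∀ t ∈ Aset G y z, G.dist x t = 3)
    (hAzy : ∀ s ∈ Aset G z y, G.dist x s = 3 ∨ G.dist x s = 4) :
    ∀ s ∈ Aset G z y, G.dist x s = 4 := by
  classical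
  refine dist_eq_of_sum_distWeight_eq (b := -2) (j := 3) (by norm_num)
    (fun s hs => (hAzy s hs).symm) ?_
  have h := hbal.sub_eq (by norm_num) hyz hcard x
  rw [sum_toFinset_eq_ncard_mul (c := ((-2) ^ 3)⁻¹) fun t ht => by rw [distWeight_apply, hAyz t ht],
    distWeight_apply, distWeight_apply, hxy, hxz] at h
  norm_num at h
  rw [hcard]
  norm_num
  linear_combination -h / 3

end Exceptional

section ForkCompletion

variable [Fintype V] {G : SimpleGraph V} {D : ℕ} {p : ℕ → ℕ → ℕ → ℕ} {b : ℝ} {x z c w : V}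

/-- If all of `A(c, w)` stays at distance `2` from `x`, then balance at `x` gives `b = -2`, and
balance at each `u ∈ B(x, c)` puts all of `A(w, c)` at distance `4` from `u`. -/
lemma IsFork.Bset_eq_of_forall_dist_eq_two (h : IsFork G x z c w) (hG : DistRegularGraph G D p)
    (hD : 1 ≤ D) (hfree : G.CliqueFree 3) (hpar₃ : ParallelogramFree G 3)
    (hpar₄ : ParallelogramFree G 4) (hbal : BalancedAt G b 2) (hb₀ : b ≠ 0) (hb₁ : b ≠ 1)
    (hAcw : ∀ t ∈ Aset G c w, G.dist x t = 2) (hAwc : ∀ s ∈ Aset G w c, G.dist x s = 3)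
    {s : V} (hs : s ∈ Aset G w c) : Bset G x c = Bset G x s := by
  have hcw := h.dist_eq_two hG.connected hfree
  have hcard : (Aset G w c).ncard = (Aset G c w).ncard := by
    rw [hG.ncard_Aset hD, hG.ncard_Aset hD, G.dist_comm]
  obtain rfl : b = -2 := hbal.eq_neg_two hb₀ hb₁ hcw hcard
    (hcard ▸ Set.ncard_ne_zero_of_mem hs) h.dist_xc h.dist_xw hAcw hAwc
  refine Set.eq_of_subset_of_ncard_le (fun u hu => ⟨hu.1, ?_⟩)
    (hG.ncard_Bset_congr ((hAwc s hs).trans h.dist_xc.symm)).le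
  obtain ⟨-, huw⟩ := h.dist_eq_three_of_mem_Bset hG.connected hpar₃ hu
  have huc : G.dist u c = 4 := by rw [G.dist_comm, hu.2, h.dist_xc]
  have hut : ∀ t ∈ Aset G c w, G.dist u t = 3 := fun t ht => by
    have := hG.connected.dist_triangle (u := u) (v := x) (w := t)
    have := hG.connected.dist_triangle (u := u) (v := t) (w := c)
    grind [G.dist_comm, hAcw t ht, ht.1, hu.1]
  have hus : ∀ s ∈ Aset G w c, G.dist u s = 3 ∨ G.dist u s = 4 := fun s hs =>
    h.dist_eq_three_or_four hG.connected hfree hpar₃ hpar₄ hu hs.1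
      (by rw [hs.2, G.dist_comm, hcw]) (hAwc s hs)
  rw [G.dist_comm, hbal.dist_eq_four hcw hcard huc huw hut hus s hs, hAwc s hs]

lemma IsFork.exists_Bset_eq_of_Cset_subsingleton (h : IsFork G x z c w)
    (hG : DistRegularGraph G D p) (hD : 2 ≤ D) (hfree : G.CliqueFree 3)
    (hpar₃ : ParallelogramFree G 3) (hpar₄ : ParallelogramFree G 4) (hbal : BalancedAt G b 2)
    (hb₀ : b ≠ 0) (hb₁ : b ≠ 1) (ha₂ : p 2 1 2 ≠ 0)
    (huniq : ∀ y y', G.dist y y' = 2 → (Cset G y y').Subsingleton) :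
    ∃ s, G.dist w s = 1 ∧ G.dist x s = 3 ∧ Bset G x c = Bset G x s := by
  have hcw := h.dist_eq_two hG.connected hfree
  have hAwc : ∀ s ∈ Aset G w c, G.dist x s = 3 := fun s ⟨hws, hcs⟩ => by
    have hsz : G.dist s z = 2 := dist_eq_two_of_cliqueFree_three hG.connected hfree hws
      (G.dist_comm.trans h.dist_zw) (by rintro rfl; grind [G.dist_comm, h.dist_zc])
    exact h.dist_eq_three_of_dist_eq_two hG.connected hfree hpar₃ (huniq s z hsz) hws
      (by rw [hcs, G.dist_comm, hcw])
  by_cases hAcw : ∀ t ∈ Aset G c w, G.dist x t = 2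
  · have hne : (Aset G w c).ncard ≠ 0 := by
      rwa [hG.ncard_Aset (by omega), G.dist_comm, hcw]
    obtain ⟨s, hs⟩ := Set.nonempty_of_ncard_ne_zero hne
    exact ⟨s, hs.1, hAwc s hs, h.Bset_eq_of_forall_dist_eq_two hG (by omega) hfree hpar₃ hpar₄
      hbal hb₀ hb₁ hAcw hAwc hs⟩
  · push Not at hAcw
    obtain ⟨t, ⟨hct, hwt⟩, hxt₂⟩ := hAcw
    obtain ⟨s, hws, hst⟩ :=
      exists_dist_eq_one_and_dist_eq hG.connected (i := 1) (hwt.trans hcw)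
    have hcs : G.dist c s = 2 := dist_eq_two_of_cliqueFree_three hG.connected hfree
      (G.dist_comm.trans hct) (G.dist_comm.trans hst) (by rintro rfl; grind [G.dist_comm])
    have hxs := hAwc s ⟨hws, by rw [hcs, G.dist_comm, hcw]⟩
    have hxt₄ := h.dist_ne_four hG.connected hfree hpar₃ hpar₄ hws hst hct hxs
    have hxt : G.dist x t = 3 := by
      have := hG.connected.dist_triangle (u := x) (v := c) (w := t)
      have := hG.connected.dist_triangle (u := x) (v := t) (w := c)
      grind [G.dist_comm, h.dist_xc]
    exact ⟨s, hws, hxs, (Bset_eq_of_dist_eq_one hG.connected hpar₄ hct h.dist_xc hxt).trans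
      (Bset_eq_of_dist_eq_one hG.connected hpar₄ (G.dist_comm.trans hst) hxt hxs)⟩

lemma IsFork.exists_Bset_eq (h : IsFork G x z c w) (hG : DistRegularGraph G D p) (hD : 2 ≤ D)
    (hfree : G.CliqueFree 3) (hpar₃ : ParallelogramFree G 3) (hpar₄ : ParallelogramFree G 4)
    (hbal : BalancedAt G b 2) (hb₀ : b ≠ 0) (hb₁ : b ≠ 1) (ha₂ : p 2 1 2 ≠ 0) :
    ∃ s, G.dist w s = 1 ∧ G.dist x s = 3 ∧ Bset G x c = Bset G x s := by
  have hcw := h.dist_eq_two hG.connected hfree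
  have hcard : ∀ y y', G.dist y y' = 2 → (Cset G y y').ncard = p 2 1 1 := fun y y' hy => by
    rw [hG.ncard_Cset (by omega), hy]
  by_cases hsub : (Cset G c w).Subsingleton
  · refine h.exists_Bset_eq_of_Cset_subsingleton hG hD hfree hpar₃ hpar₄ hbal hb₀ hb₁ ha₂
      fun y y' hy => ?_
    rw [← Set.ncard_le_one_iff_subsingleton, hcard y y' hy, ← hcard c w hcw]
    exact Set.ncard_le_one_iff_subsingleton.2 hsub
  · obtain ⟨e, ⟨hce, hwe⟩, hez⟩ := (Set.not_subsingleton_iff.1 hsub).exists_ne z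
    rw [hcw] at hwe
    have hxe := h.dist_eq_three_of_common_neighbor hG.connected hfree hpar₃
      (fun y y' hy hy' => (hcard e y hy).trans (hcard e y' hy').symm) hce hwe hez
    exact ⟨e, hwe, hxe, Bset_eq_of_dist_eq_one hG.connected hpar₄ hce h.dist_xc hxe⟩

end ForkCompletion

section Delta

variable {G : SimpleGraph V} {x y z v w : V}

lemma mem_Delta_of_dist_add_dist_le (hG : G.Connected) (hz : z ∈ Delta G x y)
    (hv : G.dist x v + G.dist v z ≤ G.dist x z) : v ∈ Delta G x y := by
  obtain ⟨c, hc, hgeod⟩ := hz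
  have := hG.dist_triangle (u := v) (v := z) (w := c)
  have := hG.dist_triangle (u := x) (v := v) (w := c)
  exact ⟨c, hc, by omega⟩

lemma mem_Delta_of_dist_eq_one (hG : G.Connected) (hfree : G.CliqueFree 3)
    (hpar : ParallelogramFree G 4)
    (hfork : ∀ z c w, IsFork G x z c w →
      ∃ s, G.dist w s = 1 ∧ G.dist x s = 3 ∧ Bset G x c = Bset G x s)
    (hz : z ∈ Delta G x y) (hzw : G.dist z w = 1) (hw : G.dist x w = G.dist x z) :
    w ∈ Delta G x y := by
  obtain ⟨c, ⟨hxc, hB⟩, hgeod⟩ := hz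
  have hzw_ne : z ≠ w := fun h => by simp [h] at hzw
  have hle : G.dist x z ≤ 3 := by omega
  interval_cases hxz : G.dist x z
  · exact absurd ((hG.dist_eq_zero_iff.1 hxz).symm.trans (hG.dist_eq_zero_iff.1 hw)) hzw_ne
  · have := dist_eq_two_of_cliqueFree_three hG hfree hxz hw hzw_ne
    omega
  · obtain ⟨s, hws, hxs, hBs⟩ := hfork z c w ⟨hxz, hxc, by omega, hzw, hw⟩
    exact ⟨s, ⟨hxs, hBs.symm.trans hB⟩, by omega⟩
  · obtain rfl : z = c := hG.dist_eq_zero_iff.1 (by omega)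
    exact ⟨w, ⟨hw, (Bset_eq_of_dist_eq_one hG hpar hzw hxz hw).symm.trans hB⟩, by simp⟩

lemma mem_Delta_of_weakGeodetic (hG : G.Connected) (hfree : G.CliqueFree 3)
    (hpar : ParallelogramFree G 4)
    (hfork : ∀ z c w, IsFork G x z c w →
      ∃ s, G.dist w s = 1 ∧ G.dist x s = 3 ∧ Bset G x c = Bset G x s)
    (hz : z ∈ Delta G x y) (hv : G.dist x v + G.dist v z ≤ G.dist x z + 1) :
    v ∈ Delta G x y := by
  induction hn : G.dist z v generalizing z with
  | zero => rwa [← hG.dist_eq_zero_iff.1 hn]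
  | succ n ih =>
    obtain ⟨w, hzw, hwv⟩ := exists_dist_eq_one_and_dist_eq hG hn
    rw [G.dist_comm (u := v), hn] at hv
    have := hG.dist_triangle (u := x) (v := v) (w := w)
    have := hG.dist_triangle (u := x) (v := w) (w := z)
    have hw : w ∈ Delta G x y := by
      rcases eq_or_ne (G.dist x w) (G.dist x z) with hxw | hxw
      · exact mem_Delta_of_dist_eq_one hG hfree hpar hfork hz hzw hxw
      · exact mem_Delta_of_dist_add_dist_le hG hz (by grind [G.dist_comm])
    exact ih hw (by grind [G.dist_comm]) hwv

end Delta

namespace DistRegularGraph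

variable [Fintype V] {G : SimpleGraph V} {D : ℕ} {p : ℕ → ℕ → ℕ → ℕ} {b : ℝ}

lemma parallelogramFree_of_balancedAt (hG : DistRegularGraph G D p) (hD : 1 ≤ D)
    (hfree : G.CliqueFree 3) (hb₀ : b ≠ 0) (hb₁ : b ≠ 1) {n : ℕ} (hbn : b ^ n ≠ 1)
    (hbal : BalancedAt G b n) : ParallelogramFree G (n + 1) := fun _ y z _ =>
  hbal.not_isParallelogram hG.connected hfree hb₀ hb₁ hbn <| by
    rw [hG.ncard_Aset hD, hG.ncard_Aset hD, G.dist_comm]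

end DistRegularGraph

/-- Classical parameters `(D, b, α, β)`, `D ≥ 4`, `a₁ = 0`, `a₂ ≠ 0`,
`∂(x,y) = 3`, `Δ = [x, C]`. Then `Δ` is weak-geodetically closed with respect to `x`:
for all `z ∈ Δ` and all `v` with `∂(x,v) + ∂(v,z) ≤ ∂(x,z) + 1`, one has `v ∈ Δ`. -/
theorem Delta_wgc_wrt_x [Fintype V] (G : SimpleGraph V) (hconn : G.Connected)
    (D : ℕ) (hD : 4 ≤ D)
    (hdiam_le : ∀ x y : V, G.dist x y ≤ D) (hdiam : ∃ x y : V, G.dist x y = D)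
    (p : ℕ → ℕ → ℕ → ℕ) (hdr : G.IsDistRegularWith D p)
    (b α β : ℝ) (hcp : HasClassicalParams D p b α β)
    (ha1 : p 1 1 1 = 0) (ha2 : p 2 1 2 ≠ 0)
    (x y : V) (hxy : G.dist x y = 3) :
    ∀ z ∈ Delta G x y, ∀ v : V,
      G.dist x v + G.dist v z ≤ G.dist x z + 1 → v ∈ Delta G x y := by
  have hG : DistRegularGraph G D p := ⟨hconn, hdiam_le, hdiam, hdr⟩
  have hfree : G.CliqueFree 3 := hG.cliqueFree_three (by omega) ha1
  have hb₀ : b ≠ 0 := hcp.1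
  have hb₁ : b ≠ 1 := hG.b_ne_one hcp (by omega) ha1 ha2
  have hpow : ∀ n ≠ 0, b ^ n ≠ 1 := fun n hn =>
    (pow_eq_one_iff_of_ne_neg_one hb₁ hcp.2.1).not.2 hn
  have hbal₂ : BalancedAt G b 2 := hG.balancedAt_two hcp (by omega) hb₁ ha1
  have hbal₃ : BalancedAt G b 3 := hG.balancedAt_three hcp (by omega) hb₁ ha1
  have hpar₃ : ParallelogramFree G 3 :=
    hG.parallelogramFree_of_balancedAt (by omega) hfree hb₀ hb₁ (hpow 2 two_ne_zero) hbal₂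
  have hpar₄ : ParallelogramFree G 4 :=
    hG.parallelogramFree_of_balancedAt (by omega) hfree hb₀ hb₁ (hpow 3 three_ne_zero) hbal₃
  intro z hz v hv
  refine mem_Delta_of_weakGeodetic hconn hfree hpar₄ (fun z c w h => ?_) hz hv
  exact h.exists_Bset_eq hG (by omega) hfree hpar₃ hpar₄ hbal₂ hb₀ hb₁ ha2
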